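/- arXiv:cs/0610132 — 2 statements merged into one kernel-verified Lean document; each statement's English description precedes it below -/
import Mathlib

section
/- With notation as in the context, for every v = (v_1, …, v_n) ∈ F^n and every 1 ≤ j ≤ n, one has H_v(P_j) = v_j; that is, the evaluation map sends h_v to v. -/
open MvPolynomial

/-- The polynomial `H_i ∈ F[X,Y]` attached to the rational point `(α, β)` of the Hermitian
curve: `H = −∏_{a ∈ F, a ≠ α} (X − a) · ∏_{b ∈ F, b ≠ β, b^q + b = β^q + β} (Y − b)`. -/
noncomputable def Hpoly (q : ℕ) {F : Type*} [Field F] [Fintype F] [DecidableEq F]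
    (α β : F) : MvPolynomial (Fin 2) F :=
  -((∏ a ∈ Finset.univ.erase α, (X 0 - C a)) *
    ∏ b ∈ (Finset.univ.filter fun b : F => b ^ q + b = β ^ q + β).erase β, (X 1 - C b))

/-!
Each of the two products in `H_i` runs over all roots but one of a monic polynomial that splits
with simple roots: `f = T ^ q² - T` for the first, `g = T ^ q + T - c` with `c = β ^ q + β` for the
second. Hence `H_i(α, β) = -f'(α) g'(β)`, where `f' = -1` and `g' = 1` because `q = 0` in `F`. That
`g` splits with simple roots follows from `g ∣ g ^ q - g = T ^ q² - T`, which uses `c ^ q = c`.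
At any other point of the curve one of the linear factors of `H_i` vanishes.
-/

section Frobenius

theorem X_pow_add_X_sub_C_dvd_X_pow_sq_sub_X {R : Type*} [CommRing R] (p k : ℕ) [ExpChar R p]
    {c : R} (hc : c ^ p ^ k = c) :
    (Polynomial.X ^ p ^ k + Polynomial.X - Polynomial.C c) ∣
      (Polynomial.X ^ (p ^ k) ^ 2 - Polynomial.X : Polynomial R) := by
  set g : Polynomial R := Polynomial.X ^ p ^ k + Polynomial.X - Polynomial.C c with hg
  have g_pow : g ^ p ^ k = Polynomial.X ^ (p ^ k) ^ 2 + Polynomial.X ^ p ^ k - Polynomial.C c := by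
    rw [hg, sub_pow_expChar_pow, add_pow_expChar_pow, ← pow_mul, ← pow_two, ← Polynomial.C_pow, hc]
  have g_pow_sub : g ^ p ^ k - g = Polynomial.X ^ (p ^ k) ^ 2 - Polynomial.X := by
    rw [g_pow, hg]
    ring
  rw [← g_pow_sub]
  exact dvd_sub (dvd_pow_self g (expChar_pow_pos R p k).ne') dvd_rfl

theorem pow_add_self_pow_eq_self {R : Type*} [CommSemiring R] (p k : ℕ) [ExpChar R p] {r : R}
    (hr : r ^ (p ^ k) ^ 2 = r) : (r ^ p ^ k + r) ^ p ^ k = r ^ p ^ k + r := by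
  rw [add_pow_expChar_pow, ← pow_mul, ← pow_two, hr, add_comm]

end Frobenius

section FiniteField

variable {F : Type*} [Field F] [Fintype F]

theorem exists_expChar_eq_pow_of_card_eq_pow {q n : ℕ} (hn : n ≠ 0)
    (hF : Fintype.card F = q ^ n) : ∃ p k, ExpChar F p ∧ q = p ^ k := by
  obtain ⟨p, _, m, hp, hcard⟩ := FiniteField.card' F
  obtain ⟨k, -, hk⟩ := (Nat.dvd_prime_pow hp).1 (hcard ▸ hF ▸ dvd_pow_self q hn)
  exact ⟨p, k, .prime hp, hk⟩

theorem splits_of_dvd_X_pow_card_sub_X {f : Polynomial F}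
    (hf : f ∣ Polynomial.X ^ Fintype.card F - Polynomial.X) : f.Splits := by
  have splits : (Polynomial.X ^ Fintype.card F - Polynomial.X : Polynomial F).Splits := by
    simpa using (FiniteField.isSplittingField_sub F F).splits
  exact splits.of_dvd (FiniteField.X_pow_card_sub_X_ne_zero F Fintype.one_lt_card) hf

theorem nodup_roots_of_dvd_X_pow_card_sub_X {f : Polynomial F}
    (hf : f ∣ Polynomial.X ^ Fintype.card F - Polynomial.X) : f.roots.Nodup := by
  refine Multiset.nodup_of_le (Polynomial.roots.le_of_dvd
    (FiniteField.X_pow_card_sub_X_ne_zero F Fintype.one_lt_card) hf) ?_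
  rw [FiniteField.roots_X_pow_card_sub_X]
  exact Finset.univ.nodup

variable [DecidableEq F]

theorem prod_erase_root_sub_eq_eval_derivative {f : Polynomial F} (hm : f.Monic)
    (hf : f ∣ Polynomial.X ^ Fintype.card F - Polynomial.X) {r : F} (hr : f.eval r = 0) :
    ∏ b ∈ (Finset.univ.filter fun b : F => f.eval b = 0).erase r, (r - b) =
      f.derivative.eval r := by
  have roots_eq : f.roots = (Finset.univ.filter fun b : F => f.eval b = 0).val :=
    ((nodup_roots_of_dvd_X_pow_card_sub_X hf).ext (Finset.nodup _)).2 fun b => by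
      simp [hm.ne_zero]
  rw [(splits_of_dvd_X_pow_card_sub_X hf).eval_root_derivative hm (by simpa [hm.ne_zero] using hr),
    roots_eq]
  rfl

theorem prod_univ_erase_sub_eq_neg_one (r : F) : ∏ b ∈ Finset.univ.erase r, (r - b) = -1 := by
  have monic : (Polynomial.X ^ Fintype.card F - Polynomial.X : Polynomial F).Monic :=
    Polynomial.monic_X_pow_sub (by simpa using Fintype.one_lt_card)
  have h := prod_erase_root_sub_eq_eval_derivative monic dvd_rfl (r := r)
    (by simp [FiniteField.pow_card])
  simpa [FiniteField.pow_card, Polynomial.derivative_X_pow] using h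

theorem prod_fiber_erase_sub_eq_one {q : ℕ} (hF : Fintype.card F = q ^ 2) {c r : F}
    (hr : r ^ q + r = c) :
    ∏ b ∈ (Finset.univ.filter fun b : F => b ^ q + b = c).erase r, (r - b) = 1 := by
  have one_lt : 1 < q := (one_lt_pow_iff two_ne_zero).1 (hF ▸ Fintype.one_lt_card)
  have cast_eq_zero : (q : F) = 0 := by
    have card_cast := Nat.cast_card_eq_zero F
    rwa [hF, Nat.cast_pow, sq_eq_zero_iff] at card_cast
  set g : Polynomial F := Polynomial.X ^ q + Polynomial.X - Polynomial.C c with hg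
  have monic : g.Monic := by
    rw [hg, add_sub_assoc]
    exact Polynomial.monic_X_pow_add (by simpa [Polynomial.degree_X_sub_C] using one_lt)
  have dvd : g ∣ Polynomial.X ^ Fintype.card F - Polynomial.X := by
    obtain ⟨p, k, _, rfl⟩ := exists_expChar_eq_pow_of_card_eq_pow two_ne_zero hF
    rw [hF]
    exact X_pow_add_X_sub_C_dvd_X_pow_sq_sub_X p k
      (hr ▸ pow_add_self_pow_eq_self p k (hF ▸ FiniteField.pow_card r))
  have h := prod_erase_root_sub_eq_eval_derivative monic dvd (r := r) (by simp [hg, hr])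
  simpa [hg, sub_eq_zero, Polynomial.derivative_X_pow, cast_eq_zero] using h

end FiniteField

section Hpoly

variable {F : Type*} [Field F] [Fintype F] [DecidableEq F]

theorem eval_Hpoly (q : ℕ) (α β x y : F) :
    MvPolynomial.eval ![x, y] (Hpoly q α β) =
      -((∏ a ∈ Finset.univ.erase α, (x - a)) *
        ∏ b ∈ (Finset.univ.filter fun b : F => b ^ q + b = β ^ q + β).erase β, (y - b)) := by
  simp [Hpoly]

theorem eval_Hpoly_self {q : ℕ} (hF : Fintype.card F = q ^ 2) (α β : F) :
    MvPolynomial.eval ![α, β] (Hpoly q α β) = 1 := by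
  rw [eval_Hpoly, prod_univ_erase_sub_eq_neg_one, prod_fiber_erase_sub_eq_one hF rfl]
  norm_num

theorem eval_Hpoly_of_fst_ne (q : ℕ) {α x : F} (hx : x ≠ α) (β y : F) :
    MvPolynomial.eval ![x, y] (Hpoly q α β) = 0 := by
  rw [eval_Hpoly, Finset.prod_eq_zero (i := x) (by simp [hx]) (sub_self x), zero_mul, neg_zero]

theorem eval_Hpoly_of_snd_ne {q : ℕ} {β y : F} (hy : y ≠ β) (hfib : y ^ q + y = β ^ q + β)
    (α x : F) : MvPolynomial.eval ![x, y] (Hpoly q α β) = 0 := by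
  have vanishing_factor := Finset.prod_eq_zero
    (s := (Finset.univ.filter fun b : F => b ^ q + b = β ^ q + β).erase β) (f := fun b => y - b)
    (by simp [hy, hfib]) (sub_self y)
  rw [eval_Hpoly, vanishing_factor, mul_zero, neg_zero]

end Hpoly

theorem stmt_3_general {q : ℕ} {F : Type*} [Field F] [Fintype F] [DecidableEq F]
    (hF : Fintype.card F = q ^ 2) {ι : Type*} [Fintype ι] {P : ι → F × F}
    (hPinj : Function.Injective P) {g : F → F}
    (hPcurve : ∀ i, g (P i).1 = (P i).2 ^ q + (P i).2) (v : ι → F) (j : ι) :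
    MvPolynomial.eval ![(P j).1, (P j).2]
        (∑ i, C (v i) * Hpoly q (P i).1 (P i).2) = v j := by
  have eval_of_ne (i : ι) (hij : i ≠ j) :
      MvPolynomial.eval ![(P j).1, (P j).2] (Hpoly q (P i).1 (P i).2) = 0 := by
    by_cases hfst : (P j).1 = (P i).1
    · have hsnd : (P j).2 ≠ (P i).2 := fun hsnd => hij (hPinj (Prod.ext hfst hsnd)).symm
      exact eval_Hpoly_of_snd_ne hsnd (by rw [← hPcurve, ← hPcurve, hfst]) _ _
    · exact eval_Hpoly_of_fst_ne q hfst _ _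
  simp only [map_sum, map_mul, eval_C]
  rw [Fintype.sum_eq_single j fun i hij => by rw [eval_of_ne i hij, mul_zero],
    eval_Hpoly_self hF, mul_one]

/-- For every `v = (v_1, …, v_n) ∈ F^n` and every `1 ≤ j ≤ n`, one has `H_v(P_j) = v_j`,
where `H_v = Σ_{i=1}^n v_i H_i`; that is, the evaluation map sends `h_v` to `v`. -/
theorem stmt_3 (q : ℕ) (hq : IsPrimePow q) (F : Type*) [Field F] [Fintype F] [DecidableEq F]
    (hF : Fintype.card F = q ^ 2) (P : Fin (q ^ 3) → F × F)
    (hPinj : Function.Injective P)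
    (hPcurve : ∀ i, (P i).1 ^ (q + 1) = (P i).2 ^ q + (P i).2)
    (hPsurj : ∀ a b : F, a ^ (q + 1) = b ^ q + b → ∃ i, P i = (a, b))
    (v : Fin (q ^ 3) → F) (j : Fin (q ^ 3)) :
    MvPolynomial.eval ![(P j).1, (P j).2]
        (∑ i, C (v i) * Hpoly q (P i).1 (P i).2) = v j :=
  stmt_3_general hF hPinj (g := (· ^ (q + 1))) hPcurve v j
end

section
/- Let u, m be positive integers and v ∈ F^n. For each integer i ≥ 0 let C(i) = #{(a,b,c) ∈ ℕ³ : 0 ≤ b ≤ q−1, q·a + (q+1)·b + u·c = i}, the number of monomials of R[z] of u-weighted degree i. Let N = n·m(m+1)/2 + 1 and let w be the smallest integer with Σ_{i=0}^w C(i) ≥ N, and set l = ⌊w/u⌋. Then there exists a nonzero f ∈ I_{v,m} = ⟨z − h_v, η⟩^m with deg_u(f) ≤ w and deg_z(f) ≤ l. -/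
set_option synthInstance.maxHeartbeats 1000000
set_option maxHeartbeats 1000000

open MvPolynomial

/-- The coordinate ring `R = F[X,Y]/⟨X^{q+1} − Y^q − Y⟩` of the Hermitian curve. -/
abbrev HermR (q : ℕ) (F : Type*) [Field F] :=
  MvPolynomial (Fin 2) F ⧸
    Ideal.span {(X 0 : MvPolynomial (Fin 2) F) ^ (q + 1) - X 1 ^ q - X 1}

/-- The quotient map `F[X,Y] → R`. -/
noncomputable def mkR (q : ℕ) (F : Type*) [Field F] :
    MvPolynomial (Fin 2) F →+* HermR q F :=
  Ideal.Quotient.mk _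

/-- `C(i)`: the number of monomials `x^a y^b z^c` (`0 ≤ b ≤ q−1`) of `R[z]` of `u`-weighted
degree exactly `i`. -/
def Cnt (q u i : ℕ) : ℕ :=
  ((Finset.range (i + 1) ×ˢ Finset.range (i + 1) ×ˢ Finset.range (i + 1)).filter
    fun p => p.2.1 ≤ q - 1 ∧ q * p.1 + (q + 1) * p.2.1 + u * p.2.2 = i).card

/-!
The ideal `⟨z - h, η⟩ ^ m` contains every `f` whose `k`-th Taylor coefficient at `h` is divisible
by `η ^ (m - k)` for all `k < m`. Since `R` is free of rank `q` over `F[x]`, with basis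
`1, y, …, y ^ (q - 1)`, and `η` is a polynomial of degree `q ^ 2` in `x`, the `k`-th condition
amounts to `dim R / ⟨η ^ (m - k)⟩ = q ^ 3 (m - k)` linear equations over `F`, which makes
`n m (m + 1) / 2` equations in total. The monomials of weighted degree at most `w` are linearly
independent and outnumber the equations, so some nonzero combination of them lies in the ideal.
-/

open scoped Polynomial

section InterpolationIdeal

variable {A : Type*} [CommRing A] {h η : A}

/-- The ideal `⟨z - h, η⟩` of `A[z]`, whose powers are the ideals `I_{v,m}` when `h = h_v`. -/
noncomputable abbrev interpolationIdeal (h η : A) : Ideal A[X] :=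
  Ideal.span {Polynomial.X - Polynomial.C h, Polynomial.C η}

lemma C_mul_X_sub_C_pow_mem_interpolationIdeal_pow {m k : ℕ} (hkm : k ≤ m) {a : A}
    (ha : a ∈ Ideal.span {η ^ (m - k)}) :
    Polynomial.C a * (Polynomial.X - Polynomial.C h) ^ k ∈ interpolationIdeal h η ^ m := by
  have hX : Polynomial.X - Polynomial.C h ∈ interpolationIdeal h η := Ideal.subset_span (by simp)
  have hη : Polynomial.C η ∈ interpolationIdeal h η := Ideal.subset_span (by simp)
  obtain ⟨r, rfl⟩ := Ideal.mem_span_singleton'.mp ha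
  have hmem := Ideal.mul_mem_mul (Ideal.pow_mem_pow hη (m - k)) (Ideal.pow_mem_pow hX k)
  rw [← pow_add, Nat.sub_add_cancel hkm] at hmem
  rw [map_mul, map_pow, mul_assoc]
  exact Ideal.mul_mem_left _ _ hmem

lemma mem_interpolationIdeal_pow_of_taylor_coeff_mem {m : ℕ} {f : A[X]}
    (hf : ∀ k < m, (Polynomial.taylor h f).coeff k ∈ Ideal.span {η ^ (m - k)}) :
    f ∈ interpolationIdeal h η ^ m := by
  rw [← Polynomial.sum_taylor_eq f h]
  refine Ideal.sum_mem _ fun k _ => ?_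
  rcases lt_or_ge k m with hk | hk
  · exact C_mul_X_sub_C_pow_mem_interpolationIdeal_pow hk.le (hf k hk)
  · refine Ideal.pow_le_pow_right hk (C_mul_X_sub_C_pow_mem_interpolationIdeal_pow le_rfl ?_)
    simp

/-- The first `m` Taylor coefficients of `f ∈ A[z]` at `h`, the `k`-th one modulo `η ^ (m - k)`.
Its vanishing is a system of `K`-linear equations on `f` that forces `f ∈ ⟨z - h, η⟩ ^ m`. -/
noncomputable def taylorJet (K : Type*) [CommSemiring K] [Algebra K A] (h η : A) (m : ℕ) :
    A[X] →ₗ[K] (k : Fin m) → A ⧸ Ideal.span {η ^ (m - (k : ℕ))} :=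
  LinearMap.pi fun k =>
    (Ideal.Quotient.mkₐ K (Ideal.span {η ^ (m - (k : ℕ))})).toLinearMap ∘ₗ
      (Polynomial.lcoeff A k ∘ₗ Polynomial.taylor h).restrictScalars K

lemma mem_interpolationIdeal_pow_of_taylorJet_eq_zero {K : Type*} [CommSemiring K]
    [Algebra K A] {m : ℕ} {f : A[X]} (hf : taylorJet K h η m f = 0) :
    f ∈ interpolationIdeal h η ^ m :=
  mem_interpolationIdeal_pow_of_taylor_coeff_mem fun k hk =>
    Ideal.Quotient.eq_zero_iff_mem.mp (congrFun hf ⟨k, hk⟩)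

theorem exists_mem_span_mem_interpolationIdeal_pow {K : Type*} [Field K] [Algebra K A] {m : ℕ}
    [∀ k : Fin m, Module.Finite K (A ⧸ Ideal.span {η ^ (m - (k : ℕ))})]
    {ι : Type*} [Fintype ι] {b : ι → A[X]} (hb : LinearIndependent K b)
    (hcard : ∑ k : Fin m, Module.finrank K (A ⧸ Ideal.span {η ^ (m - (k : ℕ))}) <
      Fintype.card ι) :
    ∃ f ∈ Submodule.span K (Set.range b), f ≠ 0 ∧ f ∈ interpolationIdeal h η ^ m := by
  have : Module.Finite K (Submodule.span K (Set.range b)) :=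
    Module.Finite.span_of_finite K (Set.finite_range b)
  have hker :
      LinearMap.ker ((taylorJet K h η m).domRestrict (Submodule.span K (Set.range b))) ≠ ⊥ :=
    LinearMap.ker_ne_bot_of_finrank_lt <| by
      rwa [Module.finrank_pi_fintype, finrank_span_eq_card hb]
  obtain ⟨f, hf, hf0⟩ := Submodule.exists_mem_ne_zero_of_ne_bot hker
  exact ⟨f, f.2, by simpa using hf0,
    mem_interpolationIdeal_pow_of_taylorJet_eq_zero (LinearMap.mem_ker.mp hf)⟩

end InterpolationIdeal

section QuotientDimension

lemma isScalarTower_quotient_map (R : Type*) {S A : Type*} [CommSemiring R] [CommRing S]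
    [CommRing A] [Algebra R S] [Algebra S A] [Algebra R A] [IsScalarTower R S A] (I : Ideal S) :
    IsScalarTower R (S ⧸ I) (A ⧸ I.map (algebraMap S A)) :=
  .of_algebraMap_eq fun r =>
    congrArg (Ideal.Quotient.mk _) (IsScalarTower.algebraMap_apply R S A r)

variable {K : Type*} [Field K] (A : Type*) [CommRing A] [Algebra K[X] A] [Algebra K A]
  [IsScalarTower K K[X] A]

lemma finite_quotient_span_algebraMap [Module.Finite K[X] A] {E : K[X]} (hE : E ≠ 0) :
    Module.Finite K (A ⧸ Ideal.span {algebraMap K[X] A E}) := by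
  rw [← Set.image_singleton, ← Ideal.map_span]
  have := isScalarTower_quotient_map K (A := A) (Ideal.span {E})
  have : Module.Finite K (K[X] ⧸ Ideal.span {E}) := (AdjoinRoot.powerBasis hE).finite
  have : Module.Finite (K[X] ⧸ Ideal.span {E}) (A ⧸ (Ideal.span {E}).map (algebraMap K[X] A)) :=
    .of_restrictScalars_finite K[X] _ _
  exact .trans (K[X] ⧸ Ideal.span {E}) _

lemma finrank_quotient_span_algebraMap [Module.Free K[X] A] (E : K[X]) :
    Module.finrank K (A ⧸ Ideal.span {algebraMap K[X] A E}) =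
      E.natDegree * Module.finrank K[X] A := by
  rw [← Set.image_singleton, ← Ideal.map_span, ← finrank_quotient_span_eq_natDegree (f := E)]
  rcases subsingleton_or_nontrivial (K[X] ⧸ Ideal.span {E}) with _ | _
  · have := Module.subsingleton (K[X] ⧸ Ideal.span {E})
      (A ⧸ (Ideal.span {E}).map (algebraMap K[X] A))
    simp [Module.finrank_zero_of_subsingleton]
  · have := isScalarTower_quotient_map K (A := A) (Ideal.span {E})
    let e := (Algebra.TensorProduct.quotIdealMapEquivQuotTensor A (Ideal.span {E})).toLinearEquiv
    have : Module.Free (K[X] ⧸ Ideal.span {E}) (A ⧸ (Ideal.span {E}).map (algebraMap K[X] A)) :=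
      .of_equiv e.symm
    rw [← Module.finrank_mul_finrank K (K[X] ⧸ Ideal.span {E}), e.finrank_eq,
      Module.finrank_baseChange]

end QuotientDimension

lemma sum_fin_tsub (m : ℕ) : ∑ k : Fin m, (m - (k : ℕ)) = m * (m + 1) / 2 := by
  have hflip := Finset.sum_flip (n := m) fun k => k
  rw [Finset.sum_range_succ, Nat.sub_self, add_zero, Finset.sum_range_id] at hflip
  rw [Fin.sum_univ_eq_sum_range fun k => m - k, hflip, Nat.add_sub_cancel, mul_comm]

namespace HermR

variable (q : ℕ) (F : Type*) [Field F]

/-- The equation `Y ^ q + Y - X ^ (q + 1)` of the Hermitian curve, as a polynomial in `Y` over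
`F[X]`. Being monic in `Y`, it presents `R` as a free `F[X]`-module of rank `q`. -/
noncomputable def curvePoly : F[X][X] :=
  Polynomial.X ^ q + (Polynomial.X - Polynomial.C (Polynomial.X ^ (q + 1)))

variable {q}

lemma degree_X_sub_C_X_pow_lt (hq : 2 ≤ q) :
    (Polynomial.X - Polynomial.C (Polynomial.X ^ (q + 1)) : F[X][X]).degree < (q : ℕ) := by
  rw [Polynomial.degree_X_sub_C]
  exact_mod_cast hq

lemma monic_curvePoly (hq : 2 ≤ q) : (curvePoly q F).Monic :=
  Polynomial.monic_X_pow_add (degree_X_sub_C_X_pow_lt F hq)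

lemma natDegree_curvePoly (hq : 2 ≤ q) : (curvePoly q F).natDegree = q := by
  rw [curvePoly, Polynomial.natDegree_add_eq_left_of_degree_lt, Polynomial.natDegree_X_pow]
  rw [Polynomial.degree_X_pow]
  exact degree_X_sub_C_X_pow_lt F hq

variable (q)

lemma eval₂_curvePoly {S : Type*} [CommRing S] (i : F[X] →+* S) (y : S) :
    (curvePoly q F).eval₂ i y = y ^ q + (y - i Polynomial.X ^ (q + 1)) := by
  rw [curvePoly, Polynomial.eval₂_add, Polynomial.eval₂_sub, Polynomial.eval₂_X_pow,
    Polynomial.eval₂_X, Polynomial.eval₂_C, map_pow]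

lemma mkR_X_pow_succ : mkR q F (X 0) ^ (q + 1) = mkR q F (X 1) ^ q + mkR q F (X 1) := by
  have h : mkR q F (X 0 ^ (q + 1) - X 1 ^ q - X 1) = 0 :=
    Ideal.Quotient.eq_zero_iff_mem.mpr (Ideal.mem_span_singleton_self _)
  simp only [map_sub, map_pow] at h
  linear_combination h

lemma adjoinRoot_of_X_pow_succ :
    AdjoinRoot.of (curvePoly q F) Polynomial.X ^ (q + 1) =
      AdjoinRoot.root (curvePoly q F) ^ q + AdjoinRoot.root (curvePoly q F) := by
  have h := AdjoinRoot.eval₂_root (curvePoly q F)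
  rw [eval₂_curvePoly] at h
  linear_combination -h

/-- The homomorphism `R → F[X][Y] / ⟨Y ^ q + Y - X ^ (q + 1)⟩` with `x ↦ X` and `y ↦ Y`. -/
noncomputable def toAdjoinRoot : HermR q F →ₐ[F] AdjoinRoot (curvePoly q F) :=
  Ideal.Quotient.liftₐ _
    (aeval ![AdjoinRoot.of (curvePoly q F) Polynomial.X, AdjoinRoot.root (curvePoly q F)])
    (Ideal.span_singleton_le_iff_mem (I := RingHom.ker _) |>.mpr <| by
      simp [RingHom.mem_ker, adjoinRoot_of_X_pow_succ])

/-- The homomorphism `F[X][Y] / ⟨Y ^ q + Y - X ^ (q + 1)⟩ → R` with `X ↦ x` and `Y ↦ y`. -/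
noncomputable def ofAdjoinRoot : AdjoinRoot (curvePoly q F) →ₐ[F] HermR q F :=
  AdjoinRoot.liftAlgHom _ (Polynomial.aeval (mkR q F (X 0))) (mkR q F (X 1)) <| by
    rw [eval₂_curvePoly]
    simp [mkR_X_pow_succ]

lemma toAdjoinRoot_mkR (p : MvPolynomial (Fin 2) F) :
    toAdjoinRoot q F (mkR q F p) =
      aeval ![AdjoinRoot.of (curvePoly q F) Polynomial.X, AdjoinRoot.root (curvePoly q F)] p :=
  rfl

/-- `R` as the extension of `F[X]` by a root of `curvePoly`, which transports to `R` the power basis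
`1, y, …, y ^ (q - 1)` over `F[X]`. -/
noncomputable def equivAdjoinRoot : HermR q F ≃ₐ[F] AdjoinRoot (curvePoly q F) :=
  AlgEquiv.ofAlgHom (toAdjoinRoot q F) (ofAdjoinRoot q F)
    (AdjoinRoot.algHom_ext'
      (Polynomial.algHom_ext <| by simp [ofAdjoinRoot, toAdjoinRoot_mkR])
      (by simp [ofAdjoinRoot, toAdjoinRoot_mkR]))
    (by
      refine Ideal.Quotient.algHom_ext _ (MvPolynomial.algHom_ext fun i => ?_)
      change ofAdjoinRoot q F (toAdjoinRoot q F (mkR q F (X i))) = mkR q F (X i)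
      fin_cases i <;> simp [ofAdjoinRoot, toAdjoinRoot_mkR])

variable {q F}

lemma equivAdjoinRoot_mkR (p : MvPolynomial (Fin 2) F) :
    equivAdjoinRoot q F (mkR q F p) =
      aeval ![AdjoinRoot.of (curvePoly q F) Polynomial.X, AdjoinRoot.root (curvePoly q F)] p :=
  rfl

lemma equivAdjoinRoot_aeval (E : F[X]) :
    equivAdjoinRoot q F (Polynomial.aeval (mkR q F (X 0)) E) =
      algebraMap F[X] (AdjoinRoot (curvePoly q F)) E := by
  have h : (ofAdjoinRoot q F) (AdjoinRoot.of _ E) = Polynomial.aeval (mkR q F (X 0)) E := by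
    simp [ofAdjoinRoot]
  exact (equivAdjoinRoot q F).eq_symm_apply.mp h.symm

/-- The isomorphism induced by `equivAdjoinRoot` on the quotients by a polynomial `E` in `x`. -/
noncomputable def quotientSpanEquiv (E : F[X]) :
    (HermR q F ⧸ Ideal.span {Polynomial.aeval (mkR q F (X 0)) E}) ≃ₐ[F]
      AdjoinRoot (curvePoly q F) ⧸ Ideal.span {algebraMap F[X] (AdjoinRoot (curvePoly q F)) E} :=
  Ideal.quotientEquivAlg _ _ (equivAdjoinRoot q F) <| by
    rw [Ideal.map_span, Set.image_singleton, ← equivAdjoinRoot_aeval]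
    rfl

lemma finite_quotient_span_aeval_pow (hq : 2 ≤ q) {E : F[X]} (hE : E ≠ 0) (j : ℕ) :
    Module.Finite F (HermR q F ⧸ Ideal.span {Polynomial.aeval (mkR q F (X 0)) E ^ j}) := by
  have := (monic_curvePoly F hq).finite_adjoinRoot
  have := finite_quotient_span_algebraMap (AdjoinRoot (curvePoly q F)) (pow_ne_zero j hE)
  rw [← map_pow]
  exact .equiv (quotientSpanEquiv (E ^ j)).symm.toLinearEquiv

lemma finrank_quotient_span_aeval_pow (hq : 2 ≤ q) (E : F[X]) (j : ℕ) :
    Module.finrank F (HermR q F ⧸ Ideal.span {Polynomial.aeval (mkR q F (X 0)) E ^ j}) =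
      q * E.natDegree * j := by
  have := (monic_curvePoly F hq).free_adjoinRoot
  rw [← map_pow, (quotientSpanEquiv (E ^ j)).toLinearEquiv.finrank_eq,
    finrank_quotient_span_algebraMap, (AdjoinRoot.powerBasis' (monic_curvePoly F hq)).finrank,
    AdjoinRoot.powerBasis'_dim, natDegree_curvePoly F hq, Polynomial.natDegree_pow]
  ring

lemma sum_finrank_quotient_span_aeval_pow (hq : 2 ≤ q) (E : F[X]) (m : ℕ) :
    ∑ k : Fin m, Module.finrank F
        (HermR q F ⧸ Ideal.span {Polynomial.aeval (mkR q F (X 0)) E ^ (m - (k : ℕ))}) =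
      q * E.natDegree * (m * (m + 1) / 2) := by
  simp only [finrank_quotient_span_aeval_pow hq]
  rw [← Finset.mul_sum, sum_fin_tsub]

lemma mkR_X_pow_sub_X (n : ℕ) :
    mkR q F (X 0 ^ n - X 0) =
      Polynomial.aeval (mkR q F (X 0)) (Polynomial.X ^ n - Polynomial.X : F[X]) := by
  simp

lemma linearIndependent_mkR_monomial (hq : 2 ≤ q) :
    LinearIndependent F fun t : ℕ × Fin q => mkR q F (X 0 ^ t.1 * X 1 ^ (t.2 : ℕ)) := by
  have hroot : LinearIndependent F[X]
      fun b : Fin q => AdjoinRoot.root (curvePoly q F) ^ (b : ℕ) := by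
    let pb := AdjoinRoot.powerBasis' (monic_curvePoly F hq)
    have hdim : q = pb.dim := (natDegree_curvePoly F hq).symm
    simpa [pb, Function.comp_def] using
      pb.basis.linearIndependent.comp _ (finCongr hdim).injective
  refine .of_comp (equivAdjoinRoot q F).toLinearMap ?_
  convert linearIndependent_smul (Polynomial.basisMonomials F).linearIndependent hroot using 1
  ext t
  simp [equivAdjoinRoot_mkR, Algebra.smul_def, Polynomial.monomial_one_right_eq_X_pow]

variable (q F) in
/-- The monomial `x^a y^b z^c` of `R[z]`, indexed by its exponents `(a, b, c)`. -/
noncomputable def zMonomial (t : ℕ × ℕ × ℕ) : (HermR q F)[X] :=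
  Polynomial.C (mkR q F (X 0 ^ t.1 * X 1 ^ t.2.1)) * Polynomial.X ^ t.2.2

lemma linearIndepOn_zMonomial (hq : 2 ≤ q) :
    LinearIndepOn F (zMonomial q F) {t | t.2.1 < q} := by
  let exps (t : {t : ℕ × ℕ × ℕ | t.2.1 < q}) : (ℕ × Fin q) × ℕ :=
    ((t.1.1, ⟨t.1.2.1, t.2⟩), t.1.2.2)
  have hexps : Function.Injective exps := by
    rintro ⟨⟨a, b, c⟩, _⟩ ⟨⟨a', b', c'⟩, _⟩ h
    simp_all [exps]
  rw [LinearIndepOn]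
  convert (linearIndependent_smul (linearIndependent_mkR_monomial (F := F) hq)
    (Polynomial.basisMonomials (HermR q F)).linearIndependent).comp exps hexps using 1
  ext1 t
  simp [exps, zMonomial, Polynomial.smul_eq_C_mul, ← Polynomial.C_mul_X_pow_eq_monomial]

/-- The exponents `(a, b, c)` of the monomials `x^a y^b z^c` with `b ≤ q - 1` of `u`-weighted degree
at most `w`. The box `[0, w]³` only makes the set finite: for `q, u ≥ 1` it excludes nothing. -/
def exponentsLE (q u w : ℕ) : Finset (ℕ × ℕ × ℕ) :=
  (Finset.range (w + 1) ×ˢ Finset.range (w + 1) ×ˢ Finset.range (w + 1)).filter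
    fun p => p.2.1 ≤ q - 1 ∧ q * p.1 + (q + 1) * p.2.1 + u * p.2.2 ≤ w

lemma sum_cnt_le_card_exponentsLE (q u w : ℕ) :
    ∑ i ∈ Finset.range (w + 1), Cnt q u i ≤ (exponentsLE q u w).card := by
  rw [Finset.card_eq_sum_card_fiberwise (t := Finset.range (w + 1))
    (f := fun p => q * p.1 + (q + 1) * p.2.1 + u * p.2.2)]
  · refine Finset.sum_le_sum fun i hi => Finset.card_le_card fun p => ?_
    simp only [exponentsLE, Finset.mem_filter, Finset.mem_product, Finset.mem_range] at hi ⊢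
    omega
  · intro p
    simp only [exponentsLE, Finset.coe_filter, Finset.coe_range, Set.mem_ofPred_eq, Set.mem_Iio]
    omega

lemma degree_le_of_mem_span_zMonomial {u w : ℕ} (hu : 1 ≤ u) {f : (HermR q F)[X]}
    (hf : f ∈ Submodule.span F (zMonomial q F '' exponentsLE q u w)) :
    f.degree ≤ (w / u : ℕ) := by
  have hle : Submodule.span F (zMonomial q F '' exponentsLE q u w) ≤
      (Polynomial.degreeLE (HermR q F) (w / u : ℕ)).restrictScalars F := by
    rw [Submodule.span_le]
    rintro _ ⟨t, ht, rfl⟩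
    refine Polynomial.mem_degreeLE.mpr ((Polynomial.degree_C_mul_X_pow_le _ _).trans ?_)
    have hw := (Finset.mem_filter.mp ht).2.2
    exact_mod_cast (Nat.le_div_iff_mul_le hu).mpr (by nlinarith)
  exact Polynomial.mem_degreeLE.mp (hle hf)

end HermR

open HermR

theorem stmt_14_general (q : ℕ) (hq : 2 ≤ q) (F : Type*) [Field F] (E : F[X]) (hE : E ≠ 0)
    (h : HermR q F) (u m w : ℕ) (hu : 1 ≤ u)
    (hw : q * E.natDegree * (m * (m + 1) / 2) + 1 ≤ ∑ i ∈ Finset.range (w + 1), Cnt q u i) :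
    ∃ f : (HermR q F)[X], f ≠ 0 ∧
      f ∈ Ideal.span {Polynomial.X - Polynomial.C h,
        Polynomial.C (Polynomial.aeval (mkR q F (X 0)) E)} ^ m ∧
      f ∈ Submodule.span F {g : (HermR q F)[X] | ∃ a b c : ℕ, b ≤ q - 1 ∧
        q * a + (q + 1) * b + u * c ≤ w ∧
        g = Polynomial.C (mkR q F (X 0 ^ a * X 1 ^ b)) * Polynomial.X ^ c} ∧
      f.degree ≤ (w / u : ℕ) := by
  have hmono : LinearIndepOn F (zMonomial q F) (exponentsLE q u w) :=
    (linearIndepOn_zMonomial hq).mono fun t ht => by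
      have := (Finset.mem_filter.mp ht).2.1
      simp only [Set.mem_ofPred_eq]
      omega
  have hcard : q * E.natDegree * (m * (m + 1) / 2) < Fintype.card (exponentsLE q u w) := by
    rw [Fintype.card_coe]
    exact hw.trans (sum_cnt_le_card_exponentsLE q u w)
  have (k : Fin m) := finite_quotient_span_aeval_pow hq hE (m - (k : ℕ))
  obtain ⟨f, hspan, hf0, hf⟩ := exists_mem_span_mem_interpolationIdeal_pow (h := h) hmono
    ((sum_finrank_quotient_span_aeval_pow hq E m).trans_lt hcard)
  rw [← Set.image_eq_range] at hspan
  refine ⟨f, hf0, hf, Submodule.span_mono ?_ hspan, degree_le_of_mem_span_zMonomial hu hspan⟩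
  rintro _ ⟨t, ht, rfl⟩
  exact ⟨t.1, t.2.1, t.2.2, (Finset.mem_filter.mp ht).2.1, (Finset.mem_filter.mp ht).2.2, rfl⟩

/-- Let `N = n·m(m+1)/2 + 1`, let `w` be the smallest integer with `Σ_{i=0}^w C(i) ≥ N`,
and `l = ⌊w/u⌋`. Then there exists a nonzero `f ∈ I_{v,m} = ⟨z − h_v, η⟩^m` with
`deg_u(f) ≤ w` and `deg_z(f) ≤ l`. -/
theorem stmt_14 (q : ℕ) (hq : IsPrimePow q) (F : Type*) [Field F] [Fintype F] [DecidableEq F]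
    (hF : Fintype.card F = q ^ 2)
    (u m : ℕ) (hu : 1 ≤ u) (hm : 1 ≤ m)
    (P : Fin (q ^ 3) → F × F)
    (hPinj : Function.Injective P)
    (hPcurve : ∀ i, (P i).1 ^ (q + 1) = (P i).2 ^ q + (P i).2)
    (hPsurj : ∀ a b : F, a ^ (q + 1) = b ^ q + b → ∃ i, P i = (a, b))
    (v : Fin (q ^ 3) → F)
    (w : ℕ)
    (hw : q ^ 3 * (m * (m + 1) / 2) + 1 ≤ ∑ i ∈ Finset.range (w + 1), Cnt q u i)
    (hwmin : ∀ w' < w, ∑ i ∈ Finset.range (w' + 1), Cnt q u i < q ^ 3 * (m * (m + 1) / 2) + 1) :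
    ∃ f : Polynomial (HermR q F), f ≠ 0 ∧
      f ∈ (Ideal.span
          { Polynomial.X - Polynomial.C (mkR q F (∑ i, C (v i) * Hpoly q (P i).1 (P i).2)),
            Polynomial.C (mkR q F ((X 0 : MvPolynomial (Fin 2) F) ^ (q ^ 2) - X 0)) }) ^ m ∧
      f ∈ Submodule.span F {g : Polynomial (HermR q F) | ∃ a b c : ℕ, b ≤ q - 1 ∧
        q * a + (q + 1) * b + u * c ≤ w ∧
        g = Polynomial.C (mkR q F (X 0 ^ a * X 1 ^ b)) * Polynomial.X ^ c} ∧
      f.degree ≤ (w / u : ℕ) := by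
  have hq1 : 1 < q ^ 2 := Nat.one_lt_pow two_ne_zero hq.one_lt
  rw [mkR_X_pow_sub_X]
  exact stmt_14_general q hq.two_le F _ (FiniteField.X_pow_card_sub_X_ne_zero F hq1) _ u m w hu
    (by rwa [FiniteField.X_pow_card_sub_X_natDegree_eq F hq1, ← pow_succ'])
end
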